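/- Let e be an admissible tableau supported on X(v_6). If S(2k) = B∪{4n−1,4n}, then S(1) = A∪{4n−2,4n+1,4n+2}; in particular the first and last rows together form the pattern X_2. -/

import Mathlib

/-!
Row `i` contains exactly one of `t`, `8n+5-t` for each `t ≤ 4n+2` (pigeonhole on (R3)), so by (R5)
every `t ≤ 4n+2` lies in exactly `k` of the `2k` small sets. Let `rowCount n e i x` be the number
of entries of row `i` that are `≤ x`. By (R2) it is nonincreasing in `i`, and for `x ≤ 4n+2` its
average over all rows is `x/2`. Hence for row `1`, which has the largest count:

* if the last row has count at least `x/2`, all rows have count `x/2`, in particular row `1`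
  (`first_le`);
* if the last row has count below `x/2`, row `1` has count above `x/2` (`first_gt`).

The counts of the last row are known from `S(2k) = B ∪ {4n-1, 4n}`. They equal `x/2` for even
`x ≤ 4n-4` and for `x = 4n`, and lie below it for all other positive `x`. Since counts grow by at
most one as `x` grows by one, this determines the counts of row `1`, hence `S(1)`.
-/

/-- The "small set" `S(i) = { e(i,j) : 1 ≤ j ≤ 4n+2, e(i,j) ≤ 4n+2 }` of row `i`. -/
def smallSet (n : ℕ) (e : ℕ → ℕ → ℕ) (i : ℕ) : Finset ℕ :=
  ((Finset.Icc 1 (4*n+2)).filter (fun j => e i j ≤ 4*n+2)).image (e i)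

/-- `A = {1,3,5,…,4n-3}`, the odd integers `≤ 4n-3`. -/
def setA (n : ℕ) : Finset ℕ := (Finset.Icc 1 (4*n-3)).filter (fun t => ¬ 2 ∣ t)

/-- `B = {2,4,…,4n-4}`, the even integers `≤ 4n-4`. -/
def setB (n : ℕ) : Finset ℕ := (Finset.Icc 1 (4*n-4)).filter (fun t => 2 ∣ t)

/-- An admissible tableau: `e i j ∈ {1,…,8n+4}` for `1 ≤ i ≤ 2k`, `1 ≤ j ≤ 4n+2`,
subject to the conditions (R1)–(R5). -/
structure IsAdmissible (n k : ℕ) (e : ℕ → ℕ → ℕ) : Prop where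
  mem_range : ∀ i j, 1 ≤ i → i ≤ 2*k → 1 ≤ j → j ≤ 4*n+2 → 1 ≤ e i j ∧ e i j ≤ 8*n+4
  /-- (R1) rows strictly increase -/
  row_strict : ∀ i j, 1 ≤ i → i ≤ 2*k → 1 ≤ j → j < 4*n+2 → e i j < e i (j+1)
  /-- (R2) columns are nondecreasing -/
  col_mono : ∀ i j, 1 ≤ i → i < 2*k → 1 ≤ j → j ≤ 4*n+2 → e i j ≤ e (i+1) j
  /-- (R3) no row contains both `t` and `8n+5-t` -/
  no_pair : ∀ i j j', 1 ≤ i → i ≤ 2*k → 1 ≤ j → j ≤ 4*n+2 → 1 ≤ j' → j' ≤ 4*n+2 →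
    e i j + e i j' ≠ 8*n+5
  /-- (R4) each row has an even number of entries `> 4n+2` -/
  even_big : ∀ i, 1 ≤ i → i ≤ 2*k →
    Even (((Finset.Icc 1 (4*n+2)).filter (fun j => 4*n+2 < e i j)).card)
  /-- (R5) `t` and `8n+5-t` occur equally often in the tableau -/
  balanced : ∀ t, 1 ≤ t → t ≤ 8*n+4 →
    (((Finset.Icc 1 (2*k)) ×ˢ (Finset.Icc 1 (4*n+2))).filter
      (fun p => e p.1 p.2 = t)).card =
    (((Finset.Icc 1 (2*k)) ×ˢ (Finset.Icc 1 (4*n+2))).filter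
      (fun p => e p.1 p.2 = 8*n+5-t)).card

/-- The first `4n+2` entries of the one-line notation of `v₆`. -/
def bnd (n : ℕ) (j : ℕ) : ℕ :=
  if j ≤ 2*n-2 then 2*j
  else if j = 2*n-1 then 4*n-1
  else if j = 2*n then 4*n+2
  else if j = 2*n+1 then 4*n+4
  else if j = 2*n+2 then 4*n+5
  else if j = 2*n+3 then 4*n+7
  else 2*j

/-- The tableau is supported on the Schubert variety `X(v₆)`. -/
def SupportedOnXv6 (n k : ℕ) (e : ℕ → ℕ → ℕ) : Prop :=
  ∀ j, 1 ≤ j → j ≤ 4*n+2 → e (2*k) j ≤ bnd n j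

/-- The number of occurrences of `t` in row `i`. -/
def rowMult (n : ℕ) (e : ℕ → ℕ → ℕ) (i t : ℕ) : ℕ :=
  ((Finset.Icc 1 (4*n+2)).filter (fun j => e i j = t)).card

/-- The number of entries of row `i` that are at most `x`. -/
def rowCount (n : ℕ) (e : ℕ → ℕ → ℕ) (i x : ℕ) : ℕ :=
  ((Finset.Icc 1 (4*n+2)).filter (fun j => e i j ≤ x)).card

/-! ### Multiplicities and counts in a row -/

lemma rowCount_succ (n : ℕ) (e : ℕ → ℕ → ℕ) (i x : ℕ) :
    rowCount n e i (x+1) = rowCount n e i x + rowMult n e i (x+1) := by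
  unfold rowCount rowMult
  rw [← Finset.card_union_of_disjoint]
  · congr 1
    ext j
    simp only [Finset.mem_filter, Finset.mem_union]
    grind
  · rw [Finset.disjoint_filter]
    intro j _ h
    omega

section
variable {n k : ℕ} {e : ℕ → ℕ → ℕ}

lemma row_lt (he : IsAdmissible n k e) {i : ℕ} (hi : 1 ≤ i) (hi' : i ≤ 2*k) {j j' : ℕ}
    (hj : 1 ≤ j) (hjj : j < j') (hj' : j' ≤ 4*n+2) : e i j < e i j' := by
  induction j', hjj using Nat.le_induction with
  | base => exact he.row_strict i j hi hi' hj (by omega)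
  | succ l hl ih =>
    exact (ih (by omega)).trans (he.row_strict i l hi hi' (by omega) (by omega))

lemma row_inj (he : IsAdmissible n k e) {i : ℕ} (hi : 1 ≤ i) (hi' : i ≤ 2*k) {j j' : ℕ}
    (hj : 1 ≤ j) (hjm : j ≤ 4*n+2) (hj' : 1 ≤ j') (hjm' : j' ≤ 4*n+2)
    (h : e i j = e i j') : j = j' := by
  rcases lt_trichotomy j j' with hl | hl | hl
  · have := row_lt he hi hi' hj hl hjm'
    omega
  · exact hl
  · have := row_lt he hi hi' hj' hl hjm
    omega

lemma rowMult_le_one (he : IsAdmissible n k e) {i : ℕ} (hi : 1 ≤ i) (hi' : i ≤ 2*k) (t : ℕ) :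
    rowMult n e i t ≤ 1 := by
  unfold rowMult
  rw [Finset.card_le_one]
  intro a ha b hb
  simp only [Finset.mem_filter, Finset.mem_Icc] at ha hb
  exact row_inj he hi hi' ha.1.1 ha.1.2 hb.1.1 hb.1.2 (ha.2.trans hb.2.symm)

lemma rowMult_pos_iff (i t : ℕ) :
    0 < rowMult n e i t ↔ ∃ j, 1 ≤ j ∧ j ≤ 4*n+2 ∧ e i j = t := by
  unfold rowMult
  rw [Finset.card_pos]
  simp only [Finset.Nonempty, Finset.mem_filter, Finset.mem_Icc, and_assoc]

lemma mem_smallSet_iff (i t : ℕ) :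
    t ∈ smallSet n e i ↔ t ≤ 4*n+2 ∧ 0 < rowMult n e i t := by
  rw [rowMult_pos_iff]
  simp only [smallSet, Finset.mem_image, Finset.mem_filter, Finset.mem_Icc]
  grind

/-- Folding `t` and `8n+5-t` together sends the `4n+2` entries of a row injectively, hence
bijectively, onto `{1,…,4n+2}`. -/
lemma rowMult_add_compl (he : IsAdmissible n k e) {i : ℕ} (hi : 1 ≤ i) (hi' : i ≤ 2*k) {t : ℕ}
    (ht : 1 ≤ t) (ht' : t ≤ 4*n+2) : rowMult n e i t + rowMult n e i (8*n+5-t) = 1 := by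
  have hsurj := Finset.surjOn_of_injOn_of_card_le
    (s := Finset.Icc 1 (4*n+2)) (t := Finset.Icc 1 (4*n+2))
    (fun j => min (e i j) (8*n+5 - e i j))
    (by
      intro j hj
      simp only [Finset.coe_Icc, Set.mem_Icc] at hj ⊢
      have := he.mem_range i j hi hi' hj.1 hj.2
      omega)
    (by
      intro a ha b hb hab
      simp only [Finset.coe_Icc, Set.mem_Icc] at ha hb hab
      have h1 := he.mem_range i a hi hi' ha.1 ha.2
      have h2 := he.mem_range i b hi hi' hb.1 hb.2
      have h3 := he.no_pair i a b hi hi' ha.1 ha.2 hb.1 hb.2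
      exact row_inj he hi hi' ha.1 ha.2 hb.1 hb.2 (by omega))
    le_rfl
  obtain ⟨j, hj, hjt⟩ := hsurj (a := t) (by simp [ht, ht'])
  simp only [Finset.coe_Icc, Set.mem_Icc] at hj hjt
  have hr := he.mem_range i j hi hi' hj.1 hj.2
  have l1 := rowMult_le_one he hi hi' t
  have l2 := rowMult_le_one he hi hi' (8*n+5-t)
  have hpos : 0 < rowMult n e i t ∨ 0 < rowMult n e i (8*n+5-t) := by
    rw [rowMult_pos_iff, rowMult_pos_iff]
    by_cases h : e i j = t
    · exact Or.inl ⟨j, hj.1, hj.2, h⟩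
    · exact Or.inr ⟨j, hj.1, hj.2, by omega⟩
  have hnot : ¬ (0 < rowMult n e i t ∧ 0 < rowMult n e i (8*n+5-t)) := by
    rw [rowMult_pos_iff, rowMult_pos_iff]
    rintro ⟨⟨a, ha, ha', hat⟩, ⟨b, hb, hb', hbt⟩⟩
    exact he.no_pair i a b hi hi' ha ha' hb hb' (by omega)
  omega

/-! ### Averages over all rows -/

lemma card_eq_sum_rowMult (t : ℕ) :
    (((Finset.Icc 1 (2*k)) ×ˢ (Finset.Icc 1 (4*n+2))).filter
      (fun p => e p.1 p.2 = t)).card = ∑ i ∈ Finset.Icc 1 (2*k), rowMult n e i t := by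
  simp only [rowMult, Finset.card_filter, Finset.sum_product]

lemma sum_rowMult (he : IsAdmissible n k e) {t : ℕ} (ht : 1 ≤ t) (ht' : t ≤ 4*n+2) :
    ∑ i ∈ Finset.Icc 1 (2*k), rowMult n e i t = k := by
  have hb := he.balanced t ht (by omega)
  rw [card_eq_sum_rowMult, card_eq_sum_rowMult] at hb
  have hs : ∑ i ∈ Finset.Icc 1 (2*k), (rowMult n e i t + rowMult n e i (8*n+5-t)) = 2*k := by
    rw [Finset.sum_congr rfl (g := fun _ => 1)]
    · simp
    · intro i hi
      rw [Finset.mem_Icc] at hi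
      exact rowMult_add_compl he hi.1 hi.2 ht ht'
  rw [Finset.sum_add_distrib] at hs
  omega

lemma rowCount_zero (he : IsAdmissible n k e) {i : ℕ} (hi : 1 ≤ i) (hi' : i ≤ 2*k) :
    rowCount n e i 0 = 0 := by
  unfold rowCount
  rw [Finset.card_eq_zero, Finset.filter_eq_empty_iff]
  intro j hj
  rw [Finset.mem_Icc] at hj
  have := he.mem_range i j hi hi' hj.1 hj.2
  omega

lemma sum_rowCount (he : IsAdmissible n k e) {x : ℕ} (hx : x ≤ 4*n+2) :
    ∑ i ∈ Finset.Icc 1 (2*k), rowCount n e i x = k*x := by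
  induction x with
  | zero =>
    rw [mul_zero]
    apply Finset.sum_eq_zero
    intro i hi
    rw [Finset.mem_Icc] at hi
    exact rowCount_zero he hi.1 hi.2
  | succ x ih =>
    simp only [rowCount_succ, Finset.sum_add_distrib]
    rw [ih (by omega), sum_rowMult he (by omega) hx]
    ring

lemma rowCount_anti (he : IsAdmissible n k e) {i i' : ℕ} (hi : 1 ≤ i) (hii : i ≤ i')
    (hi' : i' ≤ 2*k) (x : ℕ) : rowCount n e i' x ≤ rowCount n e i x := by
  induction i', hii using Nat.le_induction with
  | base => exact le_rfl
  | succ l hl ih =>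
    refine le_trans ?_ (ih (by omega))
    apply Finset.card_le_card
    intro j hj
    simp only [Finset.mem_filter, Finset.mem_Icc] at hj ⊢
    have := he.col_mono l j (by omega) (by omega) hj.1.1 hj.1.2
    exact ⟨hj.1, by omega⟩

lemma sum_two_mul_rowCount (he : IsAdmissible n k e) {x : ℕ} (hx : x ≤ 4*n+2) :
    ∑ i ∈ Finset.Icc 1 (2*k), 2 * rowCount n e i x = ∑ _i ∈ Finset.Icc 1 (2*k), x := by
  rw [← Finset.mul_sum, sum_rowCount he hx]
  simp
  ring

/-- A last row with count at least the average forces the first row down to the average. -/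
lemma first_le (hk : 1 ≤ k) (he : IsAdmissible n k e) {x : ℕ} (hx : x ≤ 4*n+2)
    (h : x ≤ 2 * rowCount n e (2*k) x) : 2 * rowCount n e 1 x ≤ x := by
  by_contra! hlt
  have hs : ∑ _i ∈ Finset.Icc 1 (2*k), x < ∑ i ∈ Finset.Icc 1 (2*k), 2 * rowCount n e i x := by
    refine Finset.sum_lt_sum ?_ ⟨1, by simp; omega, hlt⟩
    intro i hi
    rw [Finset.mem_Icc] at hi
    have := rowCount_anti he hi.1 hi.2 le_rfl x
    omega
  rw [sum_two_mul_rowCount he hx] at hs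
  exact lt_irrefl _ hs

/-- A last row with count below the average forces the first row above the average. -/
lemma first_gt (hk : 1 ≤ k) (he : IsAdmissible n k e) {x : ℕ} (hx : x ≤ 4*n+2)
    (h : 2 * rowCount n e (2*k) x < x) : x < 2 * rowCount n e 1 x := by
  by_contra! hle
  have hs : ∑ i ∈ Finset.Icc 1 (2*k), 2 * rowCount n e i x < ∑ _i ∈ Finset.Icc 1 (2*k), x := by
    refine Finset.sum_lt_sum ?_ ⟨2*k, by simp; omega, h⟩
    intro i hi
    rw [Finset.mem_Icc] at hi
    have := rowCount_anti he le_rfl hi.1 hi.2 x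
    omega
  rw [sum_two_mul_rowCount he hx] at hs
  exact lt_irrefl _ hs

/-! ### The last row determines the first row -/

lemma rowMult_last (hk : 1 ≤ k) (he : IsAdmissible n k e)
    (hlast : smallSet n e (2*k) = setB n ∪ {4*n-1, 4*n}) {t : ℕ} (ht : 1 ≤ t)
    (ht' : t ≤ 4*n+2) :
    rowMult n e (2*k) t = if (t ≤ 4*n-4 ∧ 2 ∣ t) ∨ t = 4*n-1 ∨ t = 4*n then 1 else 0 := by
  have h1 := rowMult_le_one he (by omega : 1 ≤ 2*k) le_rfl t
  have h2 := mem_smallSet_iff (n := n) (e := e) (2*k) t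
  rw [hlast] at h2
  simp only [setB, Finset.mem_union, Finset.mem_filter, Finset.mem_Icc, Finset.mem_insert,
    Finset.mem_singleton] at h2
  split_ifs with h
  · have := (h2.1 (by tauto)).2
    omega
  · by_contra h0
    exact h (by have := h2.2 ⟨ht', by omega⟩; tauto)

/-- At even `x ≤ 4n-4` the last row meets the average, and therefore so does the first row. -/
lemma rowCount_even (hk : 1 ≤ k) (he : IsAdmissible n k e)
    (hlast : smallSet n e (2*k) = setB n ∪ {4*n-1, 4*n}) {y : ℕ} (hy : y ≤ 2*n-2) :
    rowCount n e (2*k) (2*y) = y ∧ rowCount n e 1 (2*y) = y := by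
  induction y with
  | zero =>
    exact ⟨rowCount_zero he (by omega) le_rfl, rowCount_zero he le_rfl (by omega)⟩
  | succ y ih =>
    obtain ⟨h1, h2⟩ := ih (by omega)
    have a1 := rowCount_succ n e (2*k) (2*y)
    have a2 := rowCount_succ n e (2*k) (2*y+1)
    have b1 := rowMult_last hk he hlast (t := 2*y+1) (by omega) (by omega)
    have b2 := rowMult_last hk he hlast (t := 2*y+1+1) (by omega) (by omega)
    rw [if_neg (by omega)] at b1
    rw [if_pos (by omega)] at b2
    have hc : rowCount n e (2*k) (2*y+1+1) = y+1 := by omega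
    have c1 := first_le hk he (x := 2*y+1+1) (by omega) (by omega)
    have c2 := rowCount_anti he le_rfl (by omega : 1 ≤ 2*k) le_rfl (2*y+1+1)
    exact ⟨hc, by rw [show 2*(y+1) = 2*y+1+1 by ring]; omega⟩

/-- For `y ≤ 2n-2`, the last row misses `2y+1`, so the first row contains it. -/
lemma rowMult_odd (hk : 1 ≤ k) (hn : 1 ≤ n) (he : IsAdmissible n k e)
    (hlast : smallSet n e (2*k) = setB n ∪ {4*n-1, 4*n}) {y : ℕ} (hy : y ≤ 2*n-2) :
    rowMult n e 1 (2*y+1) = 1 ∧ rowCount n e 1 (2*y+1) = y+1 ∧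
      rowCount n e (2*k) (2*y+1) = y := by
  obtain ⟨h1, h2⟩ := rowCount_even hk he hlast hy
  have a1 := rowCount_succ n e (2*k) (2*y)
  have a2 := rowCount_succ n e 1 (2*y)
  have b1 := rowMult_last hk he hlast (t := 2*y+1) (by omega) (by omega)
  rw [if_neg (by omega)] at b1
  have c1 := first_gt hk he (x := 2*y+1) (by omega) (by omega)
  have l := rowMult_le_one he le_rfl (by omega : 1 ≤ 2*k) (2*y+1)
  omega

/-- The first row on the last five values `4n-2,…,4n+2`, written with `n = p+1`. -/
lemma rowMult_top {p : ℕ} (hk : 1 ≤ k) (he : IsAdmissible (p+1) k e)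
    (hlast : smallSet (p+1) e (2*k) = setB (p+1) ∪ {4*(p+1)-1, 4*(p+1)}) :
    rowMult (p+1) e 1 (4*p+2) = 1 ∧ rowMult (p+1) e 1 (4*p+3) = 0 ∧
    rowMult (p+1) e 1 (4*p+4) = 0 ∧ rowMult (p+1) e 1 (4*p+5) = 1 ∧
    rowMult (p+1) e 1 (4*p+6) = 1 := by
  obtain ⟨-, f1, g1⟩ := rowMult_odd (y := 2*p) hk (by omega) he hlast (by omega)
  rw [show 2*(2*p)+1 = 4*p+1 by ring] at f1 g1
  have f2 := rowCount_succ (p+1) e 1 (4*p+1)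
  have f3 := rowCount_succ (p+1) e 1 (4*p+2)
  have f4 := rowCount_succ (p+1) e 1 (4*p+3)
  have f5 := rowCount_succ (p+1) e 1 (4*p+4)
  have f6 := rowCount_succ (p+1) e 1 (4*p+5)
  have g2 := rowCount_succ (p+1) e (2*k) (4*p+1)
  have g3 := rowCount_succ (p+1) e (2*k) (4*p+2)
  have g4 := rowCount_succ (p+1) e (2*k) (4*p+3)
  have g5 := rowCount_succ (p+1) e (2*k) (4*p+4)
  have g6 := rowCount_succ (p+1) e (2*k) (4*p+5)
  simp only [Nat.add_assoc, Nat.reduceAdd] at f2 f3 f4 f5 f6 g2 g3 g4 g5 g6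
  have b2 := rowMult_last hk he hlast (t := 4*p+2) (by omega) (by omega)
  have b3 := rowMult_last hk he hlast (t := 4*p+3) (by omega) (by omega)
  have b4 := rowMult_last hk he hlast (t := 4*p+4) (by omega) (by omega)
  have b5 := rowMult_last hk he hlast (t := 4*p+5) (by omega) (by omega)
  have b6 := rowMult_last hk he hlast (t := 4*p+6) (by omega) (by omega)
  rw [if_neg (by omega)] at b2 b5 b6
  rw [if_pos (by omega)] at b3 b4
  have c2 := first_gt hk he (x := 4*p+2) (by omega) (by omega)
  have c4 := first_le hk he (x := 4*p+4) (by omega) (by omega)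
  have c5 := first_gt hk he (x := 4*p+5) (by omega) (by omega)
  have c6 := first_gt hk he (x := 4*p+6) (by omega) (by omega)
  have l2 := rowMult_le_one he le_rfl (by omega : 1 ≤ 2*k) (4*p+2)
  have l5 := rowMult_le_one he le_rfl (by omega : 1 ≤ 2*k) (4*p+5)
  have l6 := rowMult_le_one he le_rfl (by omega : 1 ≤ 2*k) (4*p+6)
  omega

end

/-- case (ii), `S(2k) = B ∪ {4n-1, 4n}` forces
`S(1) = A ∪ {4n-2, 4n+1, 4n+2}` (pattern `X₂`). -/
theorem stmt_6 (n k : ℕ) (hn : 1 ≤ n) (hk : 1 ≤ k) (e : ℕ → ℕ → ℕ)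
    (he : IsAdmissible n k e) (hsupp : SupportedOnXv6 n k e)
    (hlast : smallSet n e (2*k) = setB n ∪ {4*n-1, 4*n}) :
    smallSet n e 1 = setA n ∪ {4*n-2, 4*n+1, 4*n+2} := by
  obtain ⟨p, rfl⟩ : ∃ p, n = p+1 := ⟨n-1, by omega⟩
  obtain ⟨t2, t3, t4, t5, t6⟩ := rowMult_top hk he hlast
  ext t
  rw [mem_smallSet_iff]
  simp only [setA, Finset.mem_union, Finset.mem_filter, Finset.mem_Icc, Finset.mem_insert,
    Finset.mem_singleton]
  have hcases : t = 0 ∨ (∃ y, t = 2*y+1 ∧ y ≤ 2*p) ∨ (∃ y, t = 2*y+2 ∧ y < 2*p) ∨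
      t = 4*p+2 ∨ t = 4*p+3 ∨ t = 4*p+4 ∨ t = 4*p+5 ∨ t = 4*p+6 ∨ 4*p+6 < t := by
    by_cases h1 : t % 2 = 1 ∧ t ≤ 4*p+1
    · exact Or.inr (Or.inl ⟨t/2, by omega, by omega⟩)
    by_cases h2 : t % 2 = 0 ∧ 0 < t ∧ t ≤ 4*p
    · exact Or.inr (Or.inr (Or.inl ⟨t/2-1, by omega, by omega⟩))
    omega
  rcases hcases with
    rfl | ⟨y, rfl, hy⟩ | ⟨y, rfl, hy⟩ | rfl | rfl | rfl | rfl | rfl | h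
  · have h0 : ¬ 0 < rowMult (p+1) e 1 0 := by
      rw [rowMult_pos_iff]
      rintro ⟨j, h1, h2, h3⟩
      have := he.mem_range 1 j le_rfl (by omega) h1 h2
      omega
    omega
  · have := (rowMult_odd (y := y) hk hn he hlast (by omega)).1
    omega
  · have h1 := (rowMult_odd (y := y) hk hn he hlast (by omega)).2.1
    have h2 := (rowCount_even (y := y+1) hk he hlast (by omega)).2
    have h3 := rowCount_succ (p+1) e 1 (2*y+1)
    rw [show 2*(y+1) = 2*y+1+1 by ring] at h2
    rw [show 2*y+2 = 2*y+1+1 by ring]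
    omega
  all_goals omega
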